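/- Let n ≥ 1, h > 0, α = √((n+1)/n), β = 1/(n+1), γ = (1/n)(1 ± √β), V = α(I − γ·e·eᵀ), and V₊ = [V, −V·e] with columns v₁, …, v_{n+1}. Let x₀ ∈ ℝⁿ and set x_j = x₀ + h·v_j for j = 1, …, n+1. Suppose f : ℝⁿ → ℝ is continuously differentiable on an open set Ω containing the closed ball of radius h centered at x₀, and ∇f is Lipschitz continuous on Ω with constant L > 0. Let f_j = f(x_j) for j = 0, 1, …, n+1, δf₊ = (f₁ − f₀, …, f_{n+1} − f₀)ᵀ, and let g be the solution of V₊V₊ᵀ·g = (1/h)·V₊·δf₊ (i.e. g = (1/(hα²))·V₊·δf₊). Then ‖∇f(x₀) − g‖₂ ≤ (1/2)·L·h·√n. -/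

import Mathlib

open Matrix

/-!
The columns `uⱼ` of `V₊` are unit vectors forming a tight frame, `V₊ V₊ᵀ = α² I`, and this is all
that matters. A tight frame reproduces linear functions, so `h α² (g - ∇f(x₀)) = ∑ⱼ rⱼ uⱼ`, where
`rⱼ` is the first-order Taylor remainder of `f` at the `j`-th vertex and `|rⱼ| ≤ (L/2) h² ‖uⱼ‖²`.
Bessel's inequality bounds the square of the right-hand side by `α² ∑ⱼ rⱼ²`, and taking traces in
the frame identity gives `∑ⱼ ‖uⱼ‖² = α² n`, which is where the factor `√n` comes from.
-/

section Taylor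

theorem norm_image_sub_sub_fderiv_le_of_lipschitz {E F : Type*}
    [NormedAddCommGroup E] [NormedSpace ℝ E] [NormedAddCommGroup F] [NormedSpace ℝ F]
    {f : E → F} {f' : E → E →L[ℝ] F} {s : Set E} {x y : E} {L : ℝ} (hs : StarConvex ℝ x s)
    (hf : ∀ z ∈ s, HasFDerivWithinAt f (f' z) s z)
    (hLip : ∀ z ∈ s, ‖f' z - f' x‖ ≤ L * ‖z - x‖) (hy : y ∈ s) :
    ‖f y - f x - f' x (y - x)‖ ≤ L / 2 * ‖y - x‖ ^ 2 := by
  set d := y - x with hd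
  have hmem : Set.MapsTo (fun t : ℝ => x + t • d) (Set.Icc 0 1) s :=
    fun t ht => hs.add_smul_sub_mem hy ht.1 ht.2
  have hderiv : ∀ t ∈ Set.Icc (0 : ℝ) 1, HasDerivWithinAt
      (fun t : ℝ => f (x + t • d) - f x - t • f' x d) ((f' (x + t • d) - f' x) d)
      (Set.Icc 0 1) t := by
    intro t ht
    have hline : HasDerivWithinAt (fun t : ℝ => x + t • d) d (Set.Icc 0 1) t := by
      simpa using ((hasDerivWithinAt_id t _).smul_const d).const_add x
    have hlin : HasDerivWithinAt (fun t : ℝ => t • f' x d) (f' x d) (Set.Icc 0 1) t := by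
      simpa using (hasDerivWithinAt_id t _).smul_const (f' x d)
    exact (((hf _ (hmem ht)).comp_hasDerivWithinAt t hline hmem).sub_const (f x)).sub hlin
  have hquad (t : ℝ) :
      HasDerivAt (fun t => L / 2 * ‖d‖ ^ 2 * t ^ 2) (L * ‖d‖ ^ 2 * t) t :=
    ((hasDerivAt_pow 2 t).const_mul (L / 2 * ‖d‖ ^ 2)).congr_deriv (by push_cast; ring)
  have hbound : ∀ t ∈ Set.Ico (0 : ℝ) 1, ‖(f' (x + t • d) - f' x) d‖ ≤ L * ‖d‖ ^ 2 * t := by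
    intro t ht
    calc ‖(f' (x + t • d) - f' x) d‖ ≤ ‖f' (x + t • d) - f' x‖ * ‖d‖ :=
          ContinuousLinearMap.le_opNorm _ d
      _ ≤ L * ‖x + t • d - x‖ * ‖d‖ := by
          gcongr
          exact hLip _ (hmem (Set.Ico_subset_Icc_self ht))
      _ = L * ‖d‖ ^ 2 * t := by
          rw [add_sub_cancel_left, norm_smul, Real.norm_of_nonneg ht.1]
          ring
  have hfence := image_norm_le_of_norm_deriv_right_le_deriv_boundary
    (fun t ht => (hderiv t ht).continuousWithinAt)
    (fun t ht => (hderiv t (Set.Ico_subset_Icc_self ht)).mono_of_mem_nhdsWithin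
      (Icc_mem_nhdsGE_of_mem ht))
    (by simp) hquad hbound (Set.right_mem_Icc.2 zero_le_one)
  simpa [hd] using hfence

theorem abs_sub_sub_inner_gradient_le_of_lipschitz {E : Type*}
    [NormedAddCommGroup E] [InnerProductSpace ℝ E] [CompleteSpace E]
    {f : E → ℝ} {s : Set E} {x y : E} {L : ℝ} (hs : StarConvex ℝ x s)
    (hf : ∀ z ∈ s, DifferentiableAt ℝ f z)
    (hLip : ∀ z ∈ s, ‖gradient f z - gradient f x‖ ≤ L * ‖z - x‖) (hy : y ∈ s) :
    |f y - f x - inner ℝ (gradient f x) (y - x)| ≤ L / 2 * ‖y - x‖ ^ 2 := by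
  rw [inner_gradient_left]
  refine norm_image_sub_sub_fderiv_le_of_lipschitz hs
    (fun z hz => (hf z hz).hasFDerivAt.hasFDerivWithinAt) (fun z hz => ?_) hy
  rw [← toDual_gradient, ← toDual_gradient, ← map_sub, LinearIsometryEquiv.norm_map]
  exact hLip z hz

theorem sq_sub_sub_inner_gradient_smul_le_of_lipschitz {E : Type*}
    [NormedAddCommGroup E] [InnerProductSpace ℝ E] [CompleteSpace E]
    {f : E → ℝ} {x₀ v : E} {h L : ℝ} (hh : 0 ≤ h)
    (hf : ∀ y ∈ Metric.closedBall x₀ h, DifferentiableAt ℝ f y)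
    (hLip : ∀ y ∈ Metric.closedBall x₀ h, ‖gradient f y - gradient f x₀‖ ≤ L * ‖y - x₀‖)
    (hv : ‖v‖ ≤ 1) :
    (f (x₀ + h • v) - f x₀ - inner ℝ (gradient f x₀) (h • v)) ^ 2 ≤
      (L / 2 * h ^ 2) ^ 2 * ‖v‖ ^ 2 := by
  have hstar : StarConvex ℝ x₀ (Metric.closedBall x₀ h) :=
    (convex_closedBall x₀ h).starConvex (Metric.mem_closedBall_self hh)
  have hmem : x₀ + h • v ∈ Metric.closedBall x₀ h := by
    simpa [norm_smul, abs_of_nonneg hh] using mul_le_of_le_one_right hh hv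
  have htaylor := abs_sub_sub_inner_gradient_le_of_lipschitz hstar hf hLip hmem
  rw [add_sub_cancel_left, norm_smul, Real.norm_of_nonneg hh] at htaylor
  calc (f (x₀ + h • v) - f x₀ - inner ℝ (gradient f x₀) (h • v)) ^ 2
      ≤ (L / 2 * (h * ‖v‖) ^ 2) ^ 2 := sq_le_sq' (abs_le.1 htaylor).1 (abs_le.1 htaylor).2
    _ = (L / 2 * h ^ 2) ^ 2 * ‖v‖ ^ 2 * ‖v‖ ^ 2 := by ring
    _ ≤ (L / 2 * h ^ 2) ^ 2 * ‖v‖ ^ 2 :=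
        mul_le_of_le_one_right (by positivity) (pow_le_one₀ (norm_nonneg _) hv)

end Taylor

section TightFrame

variable {E ι : Type*} [NormedAddCommGroup E] [InnerProductSpace ℝ E] [Fintype ι]

/-- The finite family `u` is a tight frame with frame bound `c`, encoded by its reconstruction
formula `∑ⱼ ⟪uⱼ, v⟫ uⱼ = c v`; for the columns of a matrix `U` this says `U Uᵀ = c I`. -/
def IsTightFrame (u : ι → E) (c : ℝ) : Prop :=
  ∀ v, ∑ j, inner ℝ (u j) v • u j = c • v

/-- The gradient estimate of `f` at `x₀` from its values at the points `x₀ + h uⱼ`. If `u` is a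
tight frame with bound `c`, it is the least-squares solution `g` of
`⟪uⱼ, g⟫ = (f (x₀ + h uⱼ) - f x₀) / h`. -/
noncomputable def simplexGradient (f : E → ℝ) (u : ι → E) (c h : ℝ) (x₀ : E) : E :=
  (1 / (h * c)) • ∑ j, (f (x₀ + h • u j) - f x₀) • u j

namespace IsTightFrame

variable {u : ι → E} {c : ℝ}

theorem sum_inner_sq (hu : IsTightFrame u c) (v : E) :
    ∑ j, inner ℝ (u j) v ^ 2 = c * ‖v‖ ^ 2 := by
  calc ∑ j, inner ℝ (u j) v ^ 2 = inner ℝ (∑ j, inner ℝ (u j) v • u j) v := by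
        simp only [sum_inner, real_inner_smul_left, sq]
    _ = c * ‖v‖ ^ 2 := by rw [hu v, real_inner_smul_left, real_inner_self_eq_norm_sq]

theorem sum_norm_sq [FiniteDimensional ℝ E] (hu : IsTightFrame u c) :
    ∑ j, ‖u j‖ ^ 2 = c * Module.finrank ℝ E := by
  let b := stdOrthonormalBasis ℝ E
  calc ∑ j, ‖u j‖ ^ 2 = ∑ j, ∑ i, inner ℝ (u j) (b i) ^ 2 := by
        simp only [← b.sum_sq_norm_inner_left, Real.norm_eq_abs, sq_abs]
    _ = ∑ i, c * ‖b i‖ ^ 2 := by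
        rw [Finset.sum_comm]
        simp only [hu.sum_inner_sq]
    _ = c * Module.finrank ℝ E := by simp [mul_comm]

theorem norm_sum_smul_sq_le (hu : IsTightFrame u c) (hc : 0 ≤ c) (r : ι → ℝ) :
    ‖∑ j, r j • u j‖ ^ 2 ≤ c * ∑ j, r j ^ 2 := by
  set w := ∑ j, r j • u j with hw
  have hinner : ‖w‖ ^ 2 = ∑ j, r j * inner ℝ (u j) w := by
    rw [← real_inner_self_eq_norm_sq]
    nth_rw 1 [hw]
    simp only [sum_inner, real_inner_smul_left]
  have hcauchy : ‖w‖ ^ 2 * ‖w‖ ^ 2 ≤ (c * ∑ j, r j ^ 2) * ‖w‖ ^ 2 := by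
    calc ‖w‖ ^ 2 * ‖w‖ ^ 2 = (∑ j, r j * inner ℝ (u j) w) ^ 2 := by rw [← hinner, ← sq]
      _ ≤ (∑ j, r j ^ 2) * ∑ j, inner ℝ (u j) w ^ 2 := Finset.sum_mul_sq_le_sq_mul_sq _ _ _
      _ = (c * ∑ j, r j ^ 2) * ‖w‖ ^ 2 := by rw [hu.sum_inner_sq]; ring
  rcases (sq_nonneg ‖w‖).eq_or_lt with hzero | hpos
  · rw [← hzero]
    positivity
  · exact le_of_mul_le_mul_right hcauchy hpos

theorem smul_simplexGradient_sub (hu : IsTightFrame u c) {h : ℝ} (hhc : h * c ≠ 0)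
    (f : E → ℝ) (x₀ v : E) :
    (h * c) • (simplexGradient f u c h x₀ - v) =
      ∑ j, (f (x₀ + h • u j) - f x₀ - inner ℝ v (h • u j)) • u j := by
  have hlinear : ∑ j, inner ℝ v (h • u j) • u j = (h * c) • v := by
    simp only [real_inner_comm _ v, real_inner_smul_left, mul_smul, ← Finset.smul_sum, hu v]
  simp only [sub_smul _ (inner ℝ v _), Finset.sum_sub_distrib, hlinear, simplexGradient, smul_sub,
    smul_smul, mul_one_div_cancel hhc, one_smul]

theorem norm_gradient_sub_simplexGradient_le [FiniteDimensional ℝ E] (hu : IsTightFrame u c)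
    (hc : 0 < c) (hunit : ∀ j, ‖u j‖ ≤ 1) {f : E → ℝ} {x₀ : E} {h L : ℝ} (hh : 0 < h)
    (hL : 0 ≤ L) (hf : ∀ y ∈ Metric.closedBall x₀ h, DifferentiableAt ℝ f y)
    (hLip : ∀ y ∈ Metric.closedBall x₀ h, ‖gradient f y - gradient f x₀‖ ≤ L * ‖y - x₀‖) :
    ‖gradient f x₀ - simplexGradient f u c h x₀‖ ≤
      1 / 2 * L * h * √(Module.finrank ℝ E) := by
  set G := gradient f x₀
  set g := simplexGradient f u c h x₀
  set r : ι → ℝ := fun j => f (x₀ + h • u j) - f x₀ - inner ℝ G (h • u j)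
  have hscaled : (h * c) ^ 2 * ‖g - G‖ ^ 2 ≤
      (h * c) ^ 2 * ((1 / 2 * L * h) ^ 2 * Module.finrank ℝ E) := by
    calc (h * c) ^ 2 * ‖g - G‖ ^ 2 = ‖∑ j, r j • u j‖ ^ 2 := by
          rw [← hu.smul_simplexGradient_sub (by positivity), norm_smul,
            Real.norm_of_nonneg (by positivity), mul_pow (h * c)]
      _ ≤ c * ∑ j, r j ^ 2 := hu.norm_sum_smul_sq_le hc.le r
      _ ≤ c * ∑ j, (L / 2 * h ^ 2) ^ 2 * ‖u j‖ ^ 2 := by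
          gcongr with j
          exact sq_sub_sub_inner_gradient_smul_le_of_lipschitz hh.le hf hLip (hunit j)
      _ = (h * c) ^ 2 * ((1 / 2 * L * h) ^ 2 * Module.finrank ℝ E) := by
          rw [← Finset.mul_sum, hu.sum_norm_sq]
          ring
  rw [norm_sub_rev, ← Real.sqrt_sq (by positivity : 0 ≤ 1 / 2 * L * h),
    ← Real.sqrt_mul (sq_nonneg _)]
  exact Real.le_sqrt_of_sq_le (le_of_mul_le_mul_left hscaled (by positivity))

end IsTightFrame

theorem isTightFrame_toLp_col {m : Type*} [Fintype m] [DecidableEq m] {U : Matrix m ι ℝ} {c : ℝ}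
    (hU : U * Uᵀ = c • 1) : IsTightFrame (fun j => WithLp.toLp 2 (U.col j)) c := by
  intro v
  have hcoord (j : ι) : inner ℝ (WithLp.toLp 2 (U.col j)) v = (Uᵀ *ᵥ v.ofLp) j := by
    simp [PiLp.inner_apply, mulVec, dotProduct, mul_comm]
  have hframe : U *ᵥ Uᵀ *ᵥ v.ofLp = c • v.ofLp := by
    rw [mulVec_mulVec, hU, smul_mulVec, one_mulVec]
  ext i
  simpa [hcoord, mulVec, dotProduct, mul_comm] using congrFun hframe i

end TightFrame

section AlignedSimplex

/-- The matrix `V = α (I - γ e eᵀ)`; for suitable `α` and `γ` its columns are `n` of the `n + 1`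
vertices of a regular simplex inscribed in the unit sphere. -/
def alignedBasis (m : Type*) [DecidableEq m] (α γ : ℝ) : Matrix m m ℝ :=
  α • (1 - γ • vecMulVec 1 1)

/-- The minimal positive basis `V₊ = [V, -V e]`: the columns of `V` followed by minus their sum. -/
def minimalPositiveBasis {m : Type*} {n : ℕ} (V : Matrix m (Fin n) ℝ) : Matrix m (Fin (n + 1)) ℝ :=
  of fun i => Fin.snoc (V i) (-(V *ᵥ 1) i)

theorem minimalPositiveBasis_mul_transpose {m : Type*} {n : ℕ} (V : Matrix m (Fin n) ℝ) :
    minimalPositiveBasis V * (minimalPositiveBasis V)ᵀ =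
      V * Vᵀ + vecMulVec (V *ᵥ 1) (V *ᵥ 1) := by
  ext i k
  simp [minimalPositiveBasis, mul_apply, Fin.sum_univ_castSucc, vecMulVec_apply]

section alignedBasis

variable {m : Type*} [DecidableEq m] (α γ : ℝ)

theorem alignedBasis_transpose : (alignedBasis m α γ)ᵀ = alignedBasis m α γ := by
  simp only [alignedBasis, transpose_smul, transpose_sub, transpose_one, transpose_vecMulVec]

variable [Fintype m]

theorem alignedBasis_mulVec_one :
    alignedBasis m α γ *ᵥ 1 = (α * (1 - Fintype.card m * γ)) • 1 := by
  simp only [alignedBasis, smul_mulVec, sub_mulVec, one_mulVec, vecMulVec_mulVec,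
    one_dotProduct_one, op_smul_eq_smul]
  module

theorem alignedBasis_mul_self : alignedBasis m α γ * alignedBasis m α γ =
    α ^ 2 • (1 + (Fintype.card m * γ ^ 2 - 2 * γ) • vecMulVec 1 1) := by
  have hones : (vecMulVec 1 1 * vecMulVec 1 1 : Matrix m m ℝ) =
      (Fintype.card m : ℝ) • vecMulVec 1 1 := by
    rw [vecMulVec_mul_vecMulVec, one_dotProduct_one, vecMulVec_smul]
  simp only [alignedBasis, smul_mul_smul_comm, sub_mul, mul_sub, one_mul, mul_one, hones]
  module

theorem sum_alignedBasis_sq (k : m) : ∑ i, alignedBasis m α γ i k ^ 2 =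
    α ^ 2 * (1 + (Fintype.card m * γ ^ 2 - 2 * γ)) := by
  have hdiag := congrFun₂ (alignedBasis_mul_self α γ) k k
  nth_rw 1 [← alignedBasis_transpose] at hdiag
  simpa [mul_apply, sq, vecMulVec_apply] using hdiag

end alignedBasis

section vertices

variable {n : ℕ} {α γ : ℝ}

theorem add_one_mul_one_sub_mul_sq_eq_one (hn : n ≠ 0)
    (hγ : γ = 1 / n * (1 - √(1 / (n + 1))) ∨ γ = 1 / n * (1 + √(1 / (n + 1)))) :
    (n + 1) * (1 - n * γ) ^ 2 = 1 := by
  have hsqrt : (1 - n * γ) ^ 2 = √(1 / (n + 1)) ^ 2 := by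
    rcases hγ with rfl | rfl <;> field_simp <;> ring
  rw [hsqrt, Real.sq_sqrt (by positivity), mul_one_div_cancel n.cast_add_one_ne_zero]

theorem mul_sq_sub_two_mul_eq_neg_sq (hn : n ≠ 0) (hγ : (n + 1) * (1 - n * γ) ^ 2 = 1) :
    n * γ ^ 2 - 2 * γ = -(1 - n * γ) ^ 2 := by
  refine mul_left_cancel₀ (Nat.cast_ne_zero.2 hn : (n : ℝ) ≠ 0) ?_
  linear_combination hγ

theorem minimalPositiveBasis_alignedBasis_mul_transpose
    (hγ : (n + 1) * (1 - n * γ) ^ 2 = 1) :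
    minimalPositiveBasis (alignedBasis (Fin n) α γ) *
      (minimalPositiveBasis (alignedBasis (Fin n) α γ))ᵀ = α ^ 2 • 1 := by
  rcases eq_or_ne n 0 with rfl | hn
  · exact Subsingleton.elim _ _
  rw [minimalPositiveBasis_mul_transpose, alignedBasis_transpose, alignedBasis_mul_self,
    alignedBasis_mulVec_one, smul_vecMulVec, vecMulVec_smul, Fintype.card_fin,
    mul_sq_sub_two_mul_eq_neg_sq hn hγ]
  module

theorem norm_minimalPositiveBasis_alignedBasis_col (hα : n * α ^ 2 = n + 1)
    (hγ : (n + 1) * (1 - n * γ) ^ 2 = 1) (j : Fin (n + 1)) :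
    ‖WithLp.toLp 2 ((minimalPositiveBasis (alignedBasis (Fin n) α γ)).col j)‖ = 1 := by
  rw [← sq_eq_sq₀ (norm_nonneg _) zero_le_one, EuclideanSpace.real_norm_sq_eq]
  cases j using Fin.lastCases with
  | cast k =>
    have hcancel := mul_sq_sub_two_mul_eq_neg_sq k.pos.ne' hγ
    simp only [minimalPositiveBasis, col_apply, of_apply, Fin.snoc_castSucc, sum_alignedBasis_sq,
      Fintype.card_fin, one_pow, hcancel]
    refine mul_left_cancel₀ (Nat.cast_add_one_ne_zero n : (n + 1 : ℝ) ≠ 0) ?_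
    linear_combination hα - α ^ 2 * hγ
  | last =>
    simp only [minimalPositiveBasis, col_apply, of_apply, Fin.snoc_last, alignedBasis_mulVec_one,
      Pi.smul_apply, Pi.one_apply, smul_eq_mul, mul_one, neg_sq, Finset.sum_const,
      Finset.card_univ, Fintype.card_fin, nsmul_eq_mul, one_pow]
    linear_combination (1 - n * γ) ^ 2 * hα + hγ

end vertices

end AlignedSimplex

/-- Error bound at the centroid: for the aligned regular simplex
of radius `h` and centroid `x₀`, if `f` is `C¹` on an open set `Ω ⊇ B̄(x₀, h)`
with `L`-Lipschitz gradient on `Ω`, then the aligned regular simplex gradient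
`g = (1/(hα²)) V₊ δf₊` satisfies `‖∇f(x₀) − g‖₂ ≤ (1/2) L h √n`. -/
theorem stmt_12 (n : ℕ) (hn : 1 ≤ n)
    (α β γ h L : ℝ) (hh : 0 < h) (hL : 0 < L)
    (hα : α = Real.sqrt ((n + 1) / n))
    (hβ : β = 1 / (n + 1))
    (hγ : γ = (1 / n) * (1 - Real.sqrt β) ∨ γ = (1 / n) * (1 + Real.sqrt β))
    (e : Fin n → ℝ) (he : e = fun _ => 1)
    (V : Matrix (Fin n) (Fin n) ℝ)
    (hV : V = α • ((1 : Matrix (Fin n) (Fin n) ℝ) - γ • Matrix.vecMulVec e e))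
    (Vp : Matrix (Fin n) (Fin (n + 1)) ℝ)
    (hVp : ∀ (i : Fin n) (j : Fin (n + 1)),
      Vp i j = if hj : (j : ℕ) < n then V i ⟨j, hj⟩ else -(V.mulVec e i))
    (x₀ : EuclideanSpace ℝ (Fin n))
    (x : Fin (n + 1) → EuclideanSpace ℝ (Fin n))
    (hx : ∀ (j : Fin (n + 1)) (i : Fin n), x j i = x₀ i + h * Vp i j)
    (f : EuclideanSpace ℝ (Fin n) → ℝ)
    (Ω : Set (EuclideanSpace ℝ (Fin n)))
    (hΩopen : IsOpen Ω)
    (hball : Metric.closedBall x₀ h ⊆ Ω)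
    (hf : ContDiffOn ℝ 1 f Ω)
    (hLip : ∀ y ∈ Ω, ∀ z ∈ Ω, ‖gradient f y - gradient f z‖ ≤ L * ‖y - z‖)
    (δ : Fin (n + 1) → ℝ)
    (hδ : ∀ j, δ j = f (x j) - f x₀)
    (g : EuclideanSpace ℝ (Fin n))
    (hg : ∀ i, g i = (1 / (h * α ^ 2)) * Vp.mulVec δ i) :
    ‖gradient f x₀ - g‖ ≤ (1 / 2) * L * h * Real.sqrt n := by
  have hn₀ : (0 : ℝ) < n := Nat.cast_pos.2 hn
  have hα_sq : α ^ 2 = (n + 1) / n := by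
    rw [hα, Real.sq_sqrt (div_nonneg n.cast_add_one_pos.le hn₀.le)]
  have hα_pos : 0 < α ^ 2 := hα_sq ▸ div_pos n.cast_add_one_pos hn₀
  have hα' : n * α ^ 2 = n + 1 := by rw [hα_sq, mul_div_cancel₀ _ hn₀.ne']
  have hγ' : (n + 1) * (1 - n * γ) ^ 2 = 1 :=
    add_one_mul_one_sub_mul_sq_eq_one (Nat.one_le_iff_ne_zero.1 hn) (hβ ▸ hγ)
  obtain rfl : e = 1 := he
  obtain rfl : V = alignedBasis (Fin n) α γ := hV
  obtain rfl : Vp = minimalPositiveBasis (alignedBasis (Fin n) α γ) := by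
    ext i j
    cases j using Fin.lastCases <;> simp [hVp, minimalPositiveBasis]
  set u : Fin (n + 1) → EuclideanSpace ℝ (Fin n) := fun j =>
    WithLp.toLp 2 ((minimalPositiveBasis (alignedBasis (Fin n) α γ)).col j)
  have hxu (j : Fin (n + 1)) : x j = x₀ + h • u j := by
    ext i
    simp [hx, u]
  have hgu : g = simplexGradient f u (α ^ 2) h x₀ := by
    ext i
    simp [hg, simplexGradient, mulVec, dotProduct, hδ, hxu, u, mul_comm]
  have hframe : IsTightFrame u (α ^ 2) :=
    isTightFrame_toLp_col (minimalPositiveBasis_alignedBasis_mul_transpose hγ')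
  simpa [hgu] using hframe.norm_gradient_sub_simplexGradient_le hα_pos
    (fun j => (norm_minimalPositiveBasis_alignedBasis_col hα' hγ' j).le) hh hL.le
    (fun y hy => (hf.contDiffAt (hΩopen.mem_nhds (hball hy))).differentiableAt one_ne_zero)
    (fun y hy => hLip y (hball hy) x₀ (hball (Metric.mem_closedBall_self hh.le)))
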